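/- Let n ≡ 3 (mod 4) be a positive integer. Then, modulo Φ_n(q)^2 · Φ_{n^2}(q)^2, the sum over k from 0 to n^2-1 of (1+q^{4k+1})(q^2;q^4)_k^3 / ((1+q)(q^4;q^4)_k^3) · q^k is congruent to [n^2]_{q^2} · (q^3;q^4)_{(n^2-1)/2} / (q^5;q^4)_{(n^2-1)/2} · q^{(1-n^2)/2}. -/

import Mathlib

open Polynomial Finset

/-- The variable `q` as an element of the field of rational functions `ℚ(q)`. -/
noncomputable def Q : RatFunc ℚ := RatFunc.X

/-- The q-shifted factorial `(a;b)_k = (1-a)(1-ab)⋯(1-ab^{k-1})` in `ℚ(q)`. -/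
noncomputable def qPoch (a b : RatFunc ℚ) (k : ℕ) : RatFunc ℚ :=
  ∏ i ∈ Finset.range k, (1 - a * b ^ i)


section part1
variable {K : Type*} [Field K]

/-- term of the parametric sum, without the factor `1 + q^(4k+1)` -/
def UU (q b : K) (k : ℕ) : K :=
  q ^ k * ∏ i ∈ range k, ((1 - q ^ (4*i+2)) * ((1 - b * q ^ (4*i+2)) * (1 - q ^ (4*i+2) / b))) /
    ((1 - q ^ (4*i+4)) * ((1 - b * q ^ (4*i+4)) * (1 - q ^ (4*i+4) / b)))

lemma UU_zero (q b : K) : UU q b 0 = 1 := by simp [UU]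

lemma UU_succ (q b : K) (k : ℕ) : UU q b (k+1) = UU q b k *
   (q * (((1 - q ^ (4*k+2)) * ((1 - b * q ^ (4*k+2)) * (1 - q ^ (4*k+2) / b))) /
    ((1 - q ^ (4*k+4)) * ((1 - b * q ^ (4*k+4)) * (1 - q ^ (4*k+4) / b))))) := by
  simp only [UU, prod_range_succ, pow_succ]; ring

lemma UU_shift (q b : K) (hq : q ≠ 0) (hb : b ≠ 0)
    (h1 : ∀ i : ℕ, b ≠ q ^ (4*i)) (h2 : ∀ i : ℕ, 1 - b * q ^ i ≠ 0) 
    (h3 : ∀ i : ℕ, 1 - q ^ (i+1) ≠ 0) (k : ℕ) :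
    UU q b k * ((1 - b*q^(4*k+2)) * (1 - b*q^4) * (b - q^(4*k))) =
      - UU q (b*q^4) k * ((b*q^2 - q^(4*k)) * (1 - b*q^(4*k+4)) * (b-1)) := by
  induction k with
  | zero => simp [UU_zero]; ring
  | succ k ih =>
    rw [UU_succ, UU_succ]
    have e1 := h1 k
    have e2 := h1 (k+1)
    have a1 := h2 (4*k+2)
    have a2 := h2 (4*k+4)
    have a3 := h2 (4*k+8)
    have a4 := h3 (4*k+3)
    have a5 := h2 4
    have a6 : b - q^(4*k) ≠ 0 := sub_ne_zero.2 e1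
    have a7 : b - q^(4*(k+1)) ≠ 0 := sub_ne_zero.2 e2
    have ih' : UU q b k = - UU q (b*q^4) k * ((b*q^2 - q^(4*k)) * (1 - b*q^(4*k+4)) * (b-1)) / 
       ((1 - b*q^(4*k+2)) * (1 - b*q^4) * (b - q^(4*k))) := by
      rw [eq_div_iff (by positivity)]; exact ih
    rw [ih']
    generalize UU q (b*q^4) k = u
    have q2 : q^(4*k+2) = q^(4*k) * q^2 := by ring
    have q4 : q^(4*k+4) = q^(4*k) * q^4 := by ring
    have q42 : q^(4*(k+1)+2) = q^(4*k) * q^6 := by ring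
    have q44 : q^(4*(k+1)+4) = q^(4*k) * q^8 := by ring
    have q40 : q^(4*(k+1)) = q^(4*k) * q^4 := by ring
    have q48 : q^(4*k+8) = q^(4*k) * q^8 := by ring
    have q43 : q^(4*k+3+1) = q^(4*k) * q^4 := by ring
    rw [q43] at a4; rw [q48] at a3; rw [q2] at a1; rw [q4] at a2; rw [q40] at a7
    rw [q42, q44, q40, q2, q4]
    generalize q^(4*k) = x at *
    have b1 : 1 - x*q^4/b ≠ 0 := by
      rw [show 1 - x*q^4/b = (b - x*q^4)/b by field_simp]; exact div_ne_zero a7 hb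
    have b2 : 1 - x*q^4/(b*q^4) ≠ 0 := by
      rw [show 1 - x*q^4/(b*q^4) = (b - x)/b by field_simp]; exact div_ne_zero a6 hb
    have b3 : 1 - b*q^4*(x*q^4) ≠ 0 := by convert a3 using 1; ring
    have r1 : 1 - x*q^4/b = (b - x*q^4)/b := by field_simp
    have r2 : 1 - x*q^4/(b*q^4) = (b - x)/b := by field_simp
    have r3 : 1 - x*q^2/(b*q^4) = (b*q^2 - x)/(b*q^2) := by field_simp
    have r4 : 1 - x*q^2/b = (b - x*q^2)/b := by field_simp
    rw [r1,r2,r3,r4]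
    rw [show 1 - b*q^4*(x*q^4) = 1 - b*(x*q^8) by ring]
    obtain ⟨A1, hA1⟩ : ∃ A, A = 1 - b * (x*q^2) := ⟨_, rfl⟩
    obtain ⟨A2, hA2⟩ : ∃ A, A = 1 - b * (x*q^4) := ⟨_, rfl⟩
    obtain ⟨A3, hA3⟩ : ∃ A, A = 1 - b * (x*q^8) := ⟨_, rfl⟩
    obtain ⟨A4, hA4⟩ : ∃ A, A = 1 - x*q^4 := ⟨_, rfl⟩
    obtain ⟨A5, hA5⟩ : ∃ A, A = 1 - b*q^4 := ⟨_, rfl⟩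
    obtain ⟨A6, hA6⟩ : ∃ A, A = b - x := ⟨_, rfl⟩
    obtain ⟨A7, hA7⟩ : ∃ A, A = b - x*q^4 := ⟨_, rfl⟩
    rw [← hA1] at a1 ⊢; rw [← hA2] at a2 ⊢; rw [← hA3] at a3 ⊢; rw [← hA4] at a4 ⊢
    rw [← hA5] at a5 ⊢; rw [← hA6] at a6 ⊢; rw [← hA7] at a7 ⊢
    clear ih ih' b1 b2 b3 r1 r2 r3 r4 h1 h2 h3
    field_simp

lemma UU_tele (q b : K) (hq : q ≠ 0) (hb : b ≠ 0)
    (h1 : ∀ i : ℕ, b ≠ q ^ (4*i)) (h2 : ∀ i : ℕ, 1 - b * q ^ i ≠ 0) 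
    (h3 : ∀ i : ℕ, 1 - q ^ (i+1) ≠ 0) (L : ℕ) :
    (1-b)*(1-b*q^3)*q * (∑ k ∈ range L, (1 + q^(4*k+1)) * UU q (b*q^4) k) 
    - (1-b*q^4)*(1-b*q) * (∑ k ∈ range L, (1 + q^(4*k+1)) * UU q b k) =
     q*(1+b*q^2)*(1-q^(4*L))*(1-b*q^(4*L+4))*(b-1)/(1-b*q^(4*L+2)) * UU q (b*q^4) L := by
  induction L with
  | zero => simp
  | succ k ih =>
    rw [sum_range_succ, sum_range_succ]
    have e1 := h1 k
    have a1 := h2 (4*k+2)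
    have a2 := h2 (4*k+4)
    have a3 := h2 (4*k+8)
    have a8 := h2 (4*k+6)
    have a4 := h3 (4*k+3)
    have a5 := h2 4
    have a6 : b - q^(4*k) ≠ 0 := sub_ne_zero.2 e1
    have ih' : UU q b k = - UU q (b*q^4) k * ((b*q^2 - q^(4*k)) * (1 - b*q^(4*k+4)) * (b-1)) / 
       ((1 - b*q^(4*k+2)) * (1 - b*q^4) * (b - q^(4*k))) := by
      rw [eq_div_iff (by positivity)]; exact UU_shift q b hq hb h1 h2 h3 k
    have ih2 : ∀ s t c : K, (1-b)*(1-b*q^3)*q * (s + (1 + q^(4*k+1)) * UU q (b*q^4) k)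
       - (1-b*q^4)*(1-b*q) * (t + (1 + q^(4*k+1)) * UU q b k) = 
       ((1-b)*(1-b*q^3)*q * s - (1-b*q^4)*(1-b*q)*t) + (1 + q^(4*k+1)) * 
       ((1-b)*(1-b*q^3)*q * UU q (b*q^4) k - (1-b*q^4)*(1-b*q)*UU q b k) := by
      intros; ring
    rw [ih2 _ _ 0, ih, ih', UU_succ]
    generalize UU q (b*q^4) k = u
    have q2 : q^(4*k+2) = q^(4*k) * q^2 := by ring
    have q1 : q^(4*k+1) = q^(4*k) * q := by ring
    have q4 : q^(4*k+4) = q^(4*k) * q^4 := by ring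
    have q42 : q^(4*(k+1)+2) = q^(4*k) * q^6 := by ring
    have q44 : q^(4*(k+1)+4) = q^(4*k) * q^8 := by ring
    have q40 : q^(4*(k+1)) = q^(4*k) * q^4 := by ring
    have q48 : q^(4*k+8) = q^(4*k) * q^8 := by ring
    have q46 : q^(4*k+6) = q^(4*k) * q^6 := by ring
    have q43 : q^(4*k+3+1) = q^(4*k) * q^4 := by ring
    rw [q43] at a4; rw [q48] at a3; rw [q2] at a1; rw [q4] at a2; rw [q46] at a8
    rw [q42, q44, q40, q2, q4, q1]
    generalize q^(4*k) = x at *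
    have r2 : 1 - x*q^4/(b*q^4) = (b - x)/b := by field_simp
    have r3 : 1 - x*q^2/(b*q^4) = (b*q^2 - x)/(b*q^2) := by field_simp
    rw [r2,r3]
    rw [show 1 - b*q^4*(x*q^4) = 1 - b*(x*q^8) by ring, show 1 - b*q^4*(x*q^2) = 1 - b*(x*q^6) by ring]
    obtain ⟨A1, hA1⟩ : ∃ A, A = 1 - b * (x*q^2) := ⟨_, rfl⟩
    obtain ⟨A2, hA2⟩ : ∃ A, A = 1 - b * (x*q^4) := ⟨_, rfl⟩
    obtain ⟨A3, hA3⟩ : ∃ A, A = 1 - b * (x*q^8) := ⟨_, rfl⟩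
    obtain ⟨A4, hA4⟩ : ∃ A, A = 1 - x*q^4 := ⟨_, rfl⟩
    obtain ⟨A5, hA5⟩ : ∃ A, A = 1 - b*q^4 := ⟨_, rfl⟩
    obtain ⟨A6, hA6⟩ : ∃ A, A = b - x := ⟨_, rfl⟩
    obtain ⟨A8, hA8⟩ : ∃ A, A = 1 - b * (x*q^6) := ⟨_, rfl⟩
    rw [← hA1] at a1 ⊢; rw [← hA2] at a2 ⊢; rw [← hA3] at a3 ⊢; rw [← hA4] at a4 ⊢
    rw [← hA5] at a5 ⊢; rw [← hA6] at a6 ⊢; rw [← hA8] at a8 ⊢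
    clear ih ih' ih2 r2 r3 h1 h2 h3
    field_simp
    simp only [hA1, hA2, hA6]
    ring

lemma UU_vanish (q : K) (hq : q ≠ 0) (M L : ℕ) (h : M < L) : UU q (q^(4*M+2)) L = 0 := by
  unfold UU
  rw [prod_eq_zero (i := M) (by simpa using h)]; · simp
  have : q ^ (4*M+2) ≠ 0 := pow_ne_zero _ hq
  simp [div_self this]

/-- the terminating summation -/
lemma UU_sum (q : K) (hq : q ≠ 0) (h3 : ∀ i : ℕ, 1 - q ^ (i+1) ≠ 0) (M L : ℕ) (h : M < L) :
    ∑ k ∈ range L, (1 + q^(4*k+1)) * UU q (q^(4*M+2)) k =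
      (1 + q) * ((1 - q^(4*M+2)) / (1 - q^2) * 
       (∏ i ∈ range M, (1 - q^(4*i+3)) / (1 - q^(4*i+5))) / q^M) := by
  induction M with
  | zero => 
    have := h3 1
    obtain ⟨L, rfl⟩ : ∃ L', L = L' + 1 := ⟨L-1, by omega⟩
    rw [sum_range_succ', sum_eq_zero]
    · simp [UU_zero]; field_simp; 
    · intro k _; rw [UU_vanish q hq 0 _ (by omega)]; simp
  | succ M ih =>
    specialize ih (by omega)
    have inj : ∀ i j : ℕ, i < j → q^i ≠ q^j := by
      intro i j hij he
      apply h3 (j-i-1)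
      rw [show j-i-1+1 = j-i by omega]
      have : q^j = q^i * q^(j-i) := by rw [← pow_add]; congr 1; omega
      have h4 : q^i ≠ 0 := pow_ne_zero _ hq
      apply mul_left_cancel₀ h4
      rw [mul_sub, ← this, he]; ring
    have inj' : ∀ i j : ℕ, i ≠ j → q^i ≠ q^j := by
      intro i j hij
      rcases lt_or_gt_of_ne hij with h | h
      · exact inj i j h
      · exact (inj j i h).symm
    have T := UU_tele q (q^(4*M+2)) hq (pow_ne_zero _ hq) (fun i => inj' _ _ (by omega)) 
      (fun i => by rw [← pow_add, show 4*M+2+i = 4*M+1+i+1 by ring]; exact h3 (4*M+1+i)) h3 L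
    have e : q^(4*M+2)*q^4 = q^(4*(M+1)+2) := by ring
    rw [e, UU_vanish q hq (M+1) L h, ih, mul_zero, sub_eq_zero] at T
    have c1 : (1-q^(4*M+2))*(1-q^(4*M+2)*q^3)*q ≠ 0 := by
      refine mul_ne_zero (mul_ne_zero (h3 _) ?_) hq
      rw [← pow_add]; exact h3 _
    apply mul_left_cancel₀ c1
    rw [T, prod_range_succ]
    have d1 := h3 1
    have d2 : 1 - q^(4*M+5) ≠ 0 := h3 _
    have d3 : 1 - q^(4*M+2) ≠ 0 := h3 _
    field_simp
    ring
end part1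

section part2
variable {K : Type*} [Field K] {Γ : Type*} [LinearOrderedCommGroupWithZero Γ]

/-- `q` is close to a primitive `n`-th root of unity for the valuation `v`. -/
structure Good (v : Valuation K Γ) (q : K) (n : ℕ) : Prop where
  vint : ∀ m : ℤ, m ≠ 0 → v (m : K) = 1
  vpi : v (1 - q ^ n) < 1
  vunit : ∀ e : ℕ, ¬ n ∣ e → v (1 - q ^ e) = 1
  vq : v q = 1
  ne : ∀ i : ℕ, 1 - q ^ (i + 1) ≠ 0
  q0 : q ≠ 0

lemma vprod_le (v : Valuation K Γ) {ι : Type*} (s : Finset ι) (f : ι → K) (h : ∀ i ∈ s, v (f i) ≤ 1) :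
    v (∏ i ∈ s, f i) ≤ 1 := by
  rw [map_prod]; exact Finset.prod_le_one' h

lemma vprod_eq (v : Valuation K Γ) {ι : Type*} (s : Finset ι) (f : ι → K) (h : ∀ i ∈ s, v (f i) = 1) :
    v (∏ i ∈ s, f i) = 1 := by
  rw [map_prod]; exact Finset.prod_eq_one h

lemma cong_mul (v : Valuation K Γ) (g : Γ) (a b c d : K) (hb : v b ≤ 1) (hc : v c ≤ 1)
    (h1 : v (a - c) ≤ g) (h2 : v (b - d) ≤ g) : v (a * b - c * d) ≤ g := by
  rw [show a * b - c * d = (a - c) * b + c * (b - d) by ring]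
  refine Valuation.map_add_le v ?_ ?_
  · rw [map_mul]; exact (mul_le_mul' h1 hb).trans (by simp)
  · rw [map_mul]; exact (mul_le_mul' hc h2).trans (by simp)

lemma cong_prod (v : Valuation K Γ) (g : Γ) {ι : Type*} (s : Finset ι) (f f' : ι → K)
    (h1 : ∀ i ∈ s, v (f i) ≤ 1) (h2 : ∀ i ∈ s, v (f' i) ≤ 1) (h : ∀ i ∈ s, v (f i - f' i) ≤ g) :
    v (∏ i ∈ s, f i - ∏ i ∈ s, f' i) ≤ g := by
  classical
  induction s using Finset.induction_on with
  | empty => simp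
  | insert a s ha ih =>
    rw [prod_insert ha, prod_insert ha]
    apply cong_mul
    · exact vprod_le v s f (fun i hi => h1 i (mem_insert_of_mem hi))
    · exact h2 a (mem_insert_self _ _)
    · exact h a (mem_insert_self _ _)
    · exact ih (fun i hi => h1 i (mem_insert_of_mem hi)) (fun i hi => h2 i (mem_insert_of_mem hi))
        (fun i hi => h i (mem_insert_of_mem hi))

lemma lagrange_val (v : Valuation K Γ) (g : Γ) (n : ℕ) (f : K[X]) (hf : f.degree < n) (w : ℕ → K)
    (hw : ∀ j < n, v (w j) ≤ 1) (hd : ∀ i < n, ∀ j < n, i ≠ j → v (w i - w j) = 1)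
    (hv : ∀ j < n, v (f.eval (w j)) ≤ g) : v (f.eval 0) ≤ g := by
  have inj : Set.InjOn w (range n : Finset ℕ) := by
    intro i hi j hj hij
    by_contra hne
    have := hd i (by simpa using hi) j (by simpa using hj) hne
    rw [hij, sub_self, map_zero] at this
    exact zero_ne_one this
  have e := Lagrange.eq_interpolate (s := range n) (v := w) (f := f) inj (by simpa using hf)
  rw [e, Lagrange.interpolate_apply, eval_finsetSum]
  refine Valuation.map_sum_le v ?_
  intro j hj
  have hj' : j < n := by simpa using hj
  rw [eval_mul, eval_C, map_mul]
  refine (mul_le_mul' (hv j hj') (?_ : v _ ≤ 1)).trans (by simp)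
  rw [Lagrange.basis, eval_prod]
  apply vprod_le
  intro i hi
  rw [mem_erase, mem_range] at hi
  rw [Lagrange.basisDivisor]
  simp only [eval_mul, eval_C, eval_sub, eval_X, map_mul, map_inv₀]
  rw [hd j hj' i hi.2 (Ne.symm hi.1)]
  simpa using hw i hi.2

/-- term with parameter `u = (b-1)^2/b`. -/
def TT (q u : K) (k : ℕ) : K :=
  q ^ k * ∏ i ∈ range k, ((1 - q ^ (4*i+2)) * ((1 - q ^ (4*i+2))^2 - q ^ (4*i+2) * u)) /
    ((1 - q ^ (4*i+4)) * ((1 - q ^ (4*i+4))^2 - q ^ (4*i+4) * u))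

lemma par_eq (b y : K) (hb : b ≠ 0) : (1 - b * y) * (1 - y / b) = (1 - y)^2 - y * ((b-1)^2/b) := by
  field_simp; ring

lemma UU_eq_TT (q b : K) (hb : b ≠ 0) (k : ℕ) : UU q b k = TT q ((b-1)^2/b) k := by
  unfold UU TT
  simp only [par_eq _ _ hb]

lemma Good.qpow {v : Valuation K Γ} {q : K} {n : ℕ} (G : Good v q n) (e : ℕ) : v (q ^ e) = 1 := by
  rw [map_pow, G.vq, one_pow]

lemma Good.le {v : Valuation K Γ} {q : K} {n : ℕ} (G : Good v q n) (e : ℕ) : v (1 - q ^ e) ≤ 1 :=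
  Valuation.map_sub_le v (by simp) (by rw [G.qpow])

lemma Good.le' {v : Valuation K Γ} {q : K} {n : ℕ} (G : Good v q n) (e : ℕ) : v (1 + q ^ e) ≤ 1 :=
  Valuation.map_add_le _ (by simp) (by rw [G.qpow])

lemma sub_val_le {v : Valuation K Γ} (x y : K) (h : v y < 1) (hx : v x = 1) : v (x - y) = 1 := by
  rw [Valuation.map_sub_eq_of_lt_left v (by rw [hx]; exact h), hx]

/-- the case of the modulus `Φ_N` -/
lemma sum_close {v : Valuation K Γ} {q : K} {N : ℕ} (G : Good v q N) (hN : N % 2 = 1) (u : K) (hu : v u < 1) :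
    v (∑ k ∈ range N, (1 + q^(4*k+1)) * TT q u k - ∑ k ∈ range N, (1 + q^(4*k+1)) * TT q 0 k) ≤ v u := by
  rw [← sum_sub_distrib]
  refine Valuation.map_sum_le v ?_
  intro k hk
  rw [mem_range] at hk
  rw [← mul_sub, map_mul]
  refine (mul_le_mul' (G.le' _) (?_ : _ ≤ v u)).trans (by simp)
  unfold TT
  rw [← mul_sub, map_mul, G.qpow, one_mul]
  have hd : ∀ i ∈ range k, v (1 - q ^ (4*i+4)) = 1 := by
    intro i hi
    rw [mem_range] at hi
    apply G.vunit
    intro hdvd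
    have : N ∣ i + 1 := by
      have h4 : N.Coprime 4 := by
        rw [show 4 = 2^2 by norm_num]
        exact Nat.Coprime.pow_right _ ((Nat.coprime_two_right).2 (Nat.odd_iff.2 hN))
      exact h4.dvd_of_dvd_mul_left (by rwa [show 4*(i+1) = 4*i+4 by ring])
    have := Nat.le_of_dvd (by omega) this
    omega
  have hnum : ∀ (e : ℕ) (u : K), v u < 1 → v ((1 - q ^ e) * ((1 - q ^ e)^2 - q ^ e * u)) ≤ 1 := by
    intro e u hu
    rw [map_mul]
    refine mul_le_one' (G.le _) (Valuation.map_sub_le v ?_ ?_)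
    · rw [map_pow]; exact pow_le_one' (G.le _) _
    · rw [map_mul, G.qpow, one_mul]; exact hu.le
  have hden : ∀ i ∈ range k, ∀ u : K, v u < 1 → v ((1 - q ^ (4*i+4)) * ((1 - q ^ (4*i+4))^2 - q ^ (4*i+4) * u)) = 1 := by
    intro i hi u hu
    rw [map_mul, hd i hi, one_mul]
    apply sub_val_le
    · rw [map_mul, G.qpow, one_mul]; exact hu
    · rw [map_pow, hd i hi, one_pow]
  have hdiff : ∀ e : ℕ, v ((1 - q ^ e) * ((1 - q ^ e)^2 - q ^ e * u) - (1 - q ^ e) * ((1 - q ^ e)^2 - q ^ e * 0)) ≤ v u := by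
    intro e
    rw [show (1 - q ^ e) * ((1 - q ^ e)^2 - q ^ e * u) - (1 - q ^ e) * ((1 - q ^ e)^2 - q ^ e * 0) = - ((1-q^e) * (q^e*u)) by ring,
      Valuation.map_neg, map_mul, map_mul, G.qpow, one_mul]
    exact (mul_le_mul' (G.le _) le_rfl).trans (by simp)
  have h0 : v (0:K) < 1 := by simp
  rw [prod_div_distrib, prod_div_distrib]
  have D1 := vprod_eq v (range k) _ (fun i hi => hden i hi u hu)
  have D2 := vprod_eq v (range k) _ (fun i hi => hden i hi 0 h0)
  have E1 := cong_prod v (v u) (range k) (fun i => (1 - q ^ (4*i+2)) * ((1 - q ^ (4*i+2))^2 - q ^ (4*i+2) * u))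
    (fun i => (1 - q ^ (4*i+2)) * ((1 - q ^ (4*i+2))^2 - q ^ (4*i+2) * 0)) (fun i _ => hnum _ _ hu)
    (fun i _ => hnum _ _ h0) (fun i _ => hdiff _)
  have E2 := cong_prod v (v u) (range k) (fun i => (1 - q ^ (4*i+4)) * ((1 - q ^ (4*i+4))^2 - q ^ (4*i+4) * 0))
    (fun i => (1 - q ^ (4*i+4)) * ((1 - q ^ (4*i+4))^2 - q ^ (4*i+4) * u)) (fun i _ => hnum _ _ h0)
    (fun i _ => hnum _ _ hu) (fun i _ => by rw [Valuation.map_sub_swap]; exact hdiff _)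
  have N2 := vprod_le v (range k) (fun i => (1 - q ^ (4*i+2)) * ((1 - q ^ (4*i+2))^2 - q ^ (4*i+2) * 0)) (fun i _ => hnum _ _ h0)
  have hne : ∀ x : K, v x = 1 → x ≠ 0 := by
    rintro x hx rfl; simp at hx
  rw [div_sub_div _ _ (hne _ D1) (hne _ D2), map_div₀, map_mul, D1, D2, one_mul, div_one,
    mul_comm (∏ i ∈ range k, (1 - q ^ (4*i+4)) * ((1 - q ^ (4*i+4))^2 - q ^ (4*i+4) * u))]
  exact cong_mul v (v u) _ _ _ _ D2.le N2 E1 E2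
end part2

section part3
variable {K : Type*} [Field K] {Γ : Type*} [LinearOrderedCommGroupWithZero Γ]

/-- indicator of divisibility -/
def del (n e : ℕ) : ℕ := if n ∣ e then 1 else 0

/-- `1 - q^e` with the factor `1 - q^n` removed if `n ∣ e` -/
def hat (q : K) (n e : ℕ) : K := if n ∣ e then (1 - q^e) / (1 - q^n) else 1 - q^e

/-- normalized quadratic factor -/
def til (q : K) (n e : ℕ) (w : K) : K :=
  if n ∣ e then (hat q n e)^2 - q^e * w else (1 - q^e)^2 - q^e * ((1 - q^n)^2 * w)

/-- polynomial approximation to `til` -/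
noncomputable def bar (q : K) (n e : ℕ) : K[X] :=
  if n ∣ e then C ((hat q n e)^2) - C (q^e) * X else C ((1 - q^e)^2)

lemma hat_mul (q : K) (n e : ℕ) (h : 1 - q^n ≠ 0) : 1 - q^e = (1 - q^n)^(del n e) * hat q n e := by
  unfold del hat
  split_ifs
  · field_simp
  · simp

lemma til_mul (q : K) (n e : ℕ) (h : 1 - q^n ≠ 0) (w : K) :
    (1 - q^e)^2 - q^e * ((1 - q^n)^2 * w) = ((1 - q^n)^2)^(del n e) * til q n e w := by
  unfold del til hat
  split_ifs
  · field_simp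
  · simp

lemma geo_close {v : Valuation K Γ} {q : K} {n : ℕ} (G : Good v q n) (h : 1 - q^n ≠ 0) (c : ℕ) :
    v ((1 - q^(n*c)) / (1 - q^n) - c) < 1 := by
  induction c with
  | zero => simp
  | succ c ih =>
    have : (1 - q^(n*(c+1))) / (1 - q^n) - ((c+1 : ℕ) : K) = ((1 - q^(n*c)) / (1 - q^n) - c) - (1 - q^n) * ((1 - q^(n*c)) / (1 - q^n)) := by
      push_cast; field_simp; ring
    rw [this]
    refine Valuation.map_sub_lt v ih ?_
    rw [map_mul]
    have : v ((1 - q^(n*c)) / (1 - q^n)) ≤ 1 := by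
      rw [show (1 - q^(n*c)) / (1 - q^n) = ((1 - q^(n*c)) / (1 - q^n) - c) + c by ring]
      refine Valuation.map_add_le v ih.le ?_
      by_cases hc : c = 0
      · simp [hc]
      · have := G.vint c (by exact_mod_cast hc)
        exact_mod_cast this.le
    exact (mul_le_mul' le_rfl this).trans_lt (by simpa using G.vpi)

lemma val_of_close {v : Valuation K Γ} (x y : K) (h : v (x - y) < 1) (hy : v y = 1) : v x = 1 := by
  have : x = y - (y - x) := by ring
  rw [this]
  apply sub_val_le _ _ _ hy
  rwa [Valuation.map_sub_swap]

lemma hat_val {v : Valuation K Γ} {q : K} {n : ℕ} (G : Good v q n) (h : 1 - q^n ≠ 0) (e : ℕ) (he : 0 < e) :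
    v (hat q n e) = 1 := by
  unfold hat
  split_ifs with hd
  · obtain ⟨c, rfl⟩ := hd
    apply val_of_close _ _ (geo_close G h c)
    have : c ≠ 0 := by rintro rfl; simp at he
    have := G.vint c (by exact_mod_cast this)
    exact_mod_cast this
  · exact G.vunit e hd

lemma til_le {v : Valuation K Γ} {q : K} {n : ℕ} (G : Good v q n) (h : 1 - q^n ≠ 0) (e : ℕ) (he : 0 < e)
    (w : K) (hw : v w ≤ 1) : v (til q n e w) ≤ 1 := by
  unfold til
  split_ifs with hd
  · refine Valuation.map_sub_le v ?_ ?_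
    · rw [map_pow, hat_val G h e he, one_pow]
    · rw [map_mul, G.qpow, one_mul]; exact hw
  · refine Valuation.map_sub_le v ?_ ?_
    · rw [map_pow]; exact pow_le_one' (G.le _) _
    · rw [map_mul, map_mul, G.qpow, one_mul, map_pow]; exact mul_le_one' (pow_le_one' (G.le _) _) hw

lemma bar_close {v : Valuation K Γ} {q : K} {n : ℕ} (G : Good v q n) (e : ℕ)
    (w : K) (hw : v w ≤ 1) : v (til q n e w - (bar q n e).eval w) ≤ v (1 - q^n) ^ 2 := by
  unfold til bar
  split_ifs with hd
  · simp
  · rw [eval_C, show ∀ a b : K, a - b - a = - b by intros; ring, Valuation.map_neg, map_mul, map_mul, G.qpow, one_mul, map_pow]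
    exact (mul_le_mul' le_rfl hw).trans (by simp)

lemma bar_le {v : Valuation K Γ} {q : K} {n : ℕ} (G : Good v q n) (h : 1 - q^n ≠ 0) (e : ℕ) (he : 0 < e)
    (w : K) (hw : v w ≤ 1) : v ((bar q n e).eval w) ≤ 1 := by
  have := bar_close G e w hw
  rw [show (bar q n e).eval w = til q n e w - (til q n e w - (bar q n e).eval w) by ring]
  exact Valuation.map_sub_le v (til_le G h e he w hw) (this.trans (pow_le_one' (G.le _) _))

lemma bar_deg (q : K) (n e : ℕ) : (bar q n e).natDegree ≤ del n e := by
  unfold bar del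
  split_ifs
  · compute_degree
  · exact (natDegree_C _).le

lemma cnt (n s d : ℕ) (hs : s < n) (hd : ∀ k, n ∣ 4*k+d ↔ n ∣ k + s + 1) (k : ℕ) :
    ∑ i ∈ range k, del n (4*i+d) = (k + s) / n := by
  induction k with
  | zero => simp [Nat.div_eq_of_lt hs]
  | succ k ih =>
    rw [sum_range_succ, ih, show k + 1 + s = k + s + 1 by ring, Nat.succ_div, del]
    simp only [hd]

lemma dvd4 {n m : ℕ} (hn : n % 2 = 1) : n ∣ 4 * m ↔ n ∣ m := by
  have h4 : n.Coprime 4 := by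
    rw [show 4 = 2^2 by norm_num]
    exact Nat.Coprime.pow_right _ ((Nat.coprime_two_right).2 (Nat.odd_iff.2 hn))
  exact ⟨fun h => h4.dvd_of_dvd_mul_left h, fun h => h.mul_left 4⟩

lemma dvdshift {n a b c : ℕ} (h : a = b + n * c) : n ∣ b ↔ n ∣ a := by
  rw [h]; exact (Nat.dvd_add_left (dvd_mul_right n c)).symm

lemma cnt2 (n : ℕ) (hn : n % 2 = 1) (k : ℕ) :
    ∑ i ∈ range k, del n (4*i+2) = (k + (n-1)/2) / n := by
  refine cnt n _ 2 (by omega) (fun k => ?_) k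
  rw [← dvd4 hn (m := k + (n-1)/2+1)]
  exact dvdshift (c := 2) (by omega)

lemma cnt4 (n : ℕ) (hn : n % 2 = 1) (k : ℕ) :
    ∑ i ∈ range k, del n (4*i+4) = k / n := by
  refine cnt n 0 4 (by omega) (fun k => ?_) k
  rw [← dvd4 hn (m := k + 0+1)]
  exact dvdshift (c := 0) (by omega)

lemma cnt3 (n : ℕ) (hn : n % 4 = 3) (k : ℕ) :
    ∑ i ∈ range k, del n (4*i+3) = (k + (3*n-1)/4) / n := by
  refine cnt n _ 3 (by omega) (fun k => ?_) k
  rw [← dvd4 (by omega) (m := k + (3*n-1)/4+1)]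
  exact dvdshift (c := 3) (by omega)

lemma cnt5 (n : ℕ) (hn : n % 4 = 3) (k : ℕ) :
    ∑ i ∈ range k, del n (4*i+5) = (k + (n+1)/4) / n := by
  refine cnt n _ 5 (by omega) (fun k => ?_) k
  rw [← dvd4 (by omega) (m := k + (n+1)/4+1)]
  exact dvdshift (c := 1) (by omega)

lemma Good.val {v : Valuation K Γ} {q : K} {n : ℕ} (G : Good v q n) (h : 1 - q^n ≠ 0) (e : ℕ) (he : 0 < e) :
    v (1 - q^e) = v (1 - q^n) ^ del n e := by
  rw [hat_mul q n e h, map_mul, hat_val G h e he, map_pow, mul_one]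

/-- closed form is small -/
lemma closed_small {v : Valuation K Γ} {q : K} {n : ℕ} (G : Good v q n) (hn : n % 4 = 3) (j M : ℕ)
    (hM : M = n * j + (n-1)/2) :
    v ((1 - q^(4*M+2)) / (1 - q^2) *
       (∏ i ∈ range M, (1 - q^(4*i+3)) / (1 - q^(4*i+5))) / q^M) ≤ v (1 - q^n) ^ 2 := by
  have h : 1 - q^n ≠ 0 := by
    have := G.ne (n-1); rwa [show n - 1 + 1 = n by omega] at this
  have hv : v (1 - q^n) ≠ 0 := by simpa using h
  rw [prod_div_distrib, map_div₀, map_mul, map_div₀, map_div₀, map_prod, map_prod, G.qpow, div_one,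
    G.vunit 2 (fun hd => by have := Nat.le_of_dvd (by norm_num) hd; omega), div_one]
  rw [prod_congr rfl (fun i _ => G.val h (4*i+3) (by omega)), prod_congr rfl (fun i _ => G.val h (4*i+5) (by omega)),
    prod_pow_eq_pow_sum, prod_pow_eq_pow_sum, cnt3 n hn, cnt5 n hn, G.val h _ (by omega)]
  have e1 : del n (4*M+2) = 1 := by
    unfold del
    rw [if_pos]
    refine ⟨4*j+2, ?_⟩
    have : 4 * M + 2 = 4 * (n*j) + 2 * n := by omega
    rw [this]; ring
  have e2 : (M + (3*n-1)/4) / n = j + 1 := by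
    rw [hM, show n * j + (n-1)/2 + (3*n-1)/4 = ((n-1)/2 + (3*n-1)/4 - n) + n * (j+1) by rw [mul_add]; omega,
      Nat.add_mul_div_left _ _ (by omega), Nat.div_eq_of_lt (by omega), zero_add]
  have e3 : (M + (n+1)/4) / n = j := by
    rw [hM, show n * j + (n-1)/2 + (n+1)/4 = ((n-1)/2 + (n+1)/4) + n * j by omega,
      Nat.add_mul_div_left _ _ (by omega), Nat.div_eq_of_lt (by omega), zero_add]
  rw [e1, e2, e3]
  apply le_of_eq
  field_simp
  rw [pow_succ, mul_comm]
end part3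

section part4
variable {K : Type*} [Field K] {Γ : Type*} [LinearOrderedCommGroupWithZero Γ]

/-- coefficient -/
def cc (q : K) (n k : ℕ) : K :=
  (1 + q^(4*k+1)) * q^k * ((1 - q^n)^3)^((k + (n-1)/2) / n - k / n) *
    ∏ i ∈ range k, hat q n (4*i+2) / hat q n (4*i+4)

lemma XY (n k : ℕ) : k / n ≤ (k + (n-1)/2) / n := Nat.div_le_div_right (by omega)

lemma TT_eq {v : Valuation K Γ} {q : K} {n : ℕ} (G : Good v q n) (hn : n % 2 = 1) (h : 1 - q^n ≠ 0) (k L : ℕ) (hk : k ≤ L) (w : K)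
    (hw : ∀ i, til q n (4*i+4) w ≠ 0) :
    (1 + q^(4*k+1)) * TT q ((1-q^n)^2*w) k * ∏ i ∈ range L, til q n (4*i+4) w =
      cc q n k * ((∏ i ∈ range k, til q n (4*i+2) w) * ∏ i ∈ Ico k L, til q n (4*i+4) w) := by
  have e : ∀ i, ((1 - q ^ (4*i+2)) * ((1 - q ^ (4*i+2))^2 - q ^ (4*i+2) * ((1-q^n)^2*w))) /
    ((1 - q ^ (4*i+4)) * ((1 - q ^ (4*i+4))^2 - q ^ (4*i+4) * ((1-q^n)^2*w))) =
    (((1-q^n)^3)^(del n (4*i+2)) / ((1-q^n)^3)^(del n (4*i+4))) * (hat q n (4*i+2) / hat q n (4*i+4)) *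
      (til q n (4*i+2) w / til q n (4*i+4) w) := by
    intro i
    rw [til_mul q n _ h, til_mul q n _ h]
    nth_rewrite 1 [hat_mul q n (4*i+2) h]
    nth_rewrite 1 [hat_mul q n (4*i+4) h]
    rw [show (1-q^n)^3 = (1-q^n) * (1-q^n)^2 by ring, mul_pow, mul_pow, div_mul_div_comm, div_mul_div_comm]
    congr 1 <;> ring
  unfold TT cc
  rw [prod_congr rfl (fun i _ => e i), prod_mul_distrib, prod_mul_distrib, prod_div_distrib (f := fun i => ((1-q^n)^3)^(del n (4*i+2))),
    prod_div_distrib (f := fun i => til q n (4*i+2) w), prod_pow_eq_pow_sum, prod_pow_eq_pow_sum, cnt2 n hn, cnt4 n hn,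
    ← prod_range_mul_prod_Ico (fun i => til q n (4*i+4) w) hk]
  have hne : ∏ i ∈ range k, til q n (4*i+4) w ≠ 0 := prod_ne_zero_iff.2 (fun i _ => hw i)
  obtain ⟨d, hd⟩ := Nat.exists_eq_add_of_le (XY n k)
  have hp : ((1-q^n)^3)^(k/n) ≠ 0 := pow_ne_zero _ (pow_ne_zero _ h)
  rw [hd, Nat.add_sub_cancel_left, pow_add ((1-q^n)^3)]
  clear e hd
  generalize ((1-q^n)^3)^(k/n) = A at *
  generalize ∏ i ∈ range k, til q n (4*i+4) w = B at *
  field_simp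

/-- polynomial approximating the cleared sum -/
noncomputable def FF (q : K) (n : ℕ) : K[X] :=
  ∑ k ∈ range (n^2), if (k + (n-1)/2) / n = k / n then
    C (cc q n k) * ((∏ i ∈ range k, bar q n (4*i+2)) * ∏ i ∈ Ico k (n^2-1), bar q n (4*i+4)) else 0

lemma FF_deg (q : K) (n : ℕ) (hn : n % 2 = 1) : (FF q n).degree < n := by
  have : (FF q n).natDegree ≤ n - 1 := by
    unfold FF
    refine natDegree_sum_le_of_forall_le _ _ ?_
    intro k hk
    rw [mem_range] at hk
    split_ifs with hX
    · refine (natDegree_C_mul_le _ _).trans (natDegree_mul_le.trans ?_)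
      have h1 : (∏ i ∈ range k, bar q n (4*i+2)).natDegree ≤ k / n := by
        rw [← hX, ← cnt2 n hn]
        exact (natDegree_prod_le _ _).trans (sum_le_sum (fun i _ => bar_deg q n _))
      have h2 : (∏ i ∈ Ico k (n^2-1), bar q n (4*i+4)).natDegree ≤ ∑ i ∈ Ico k (n^2-1), del n (4*i+4) :=
        (natDegree_prod_le _ _).trans (sum_le_sum (fun i _ => bar_deg q n _))
      have h3 := sum_range_add_sum_Ico (fun i => del n (4*i+4)) (show k ≤ n^2-1 by omega)
      rw [cnt4 n hn, cnt4 n hn] at h3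
      have h4 : (n^2-1) / n ≤ n - 1 := by
        rw [Nat.div_le_iff_le_mul_add_pred (by omega)]
        obtain ⟨m, rfl⟩ : ∃ m, n = m + 1 := ⟨n-1, by omega⟩
        have : (m+1)^2 = (m+1)*m + m + 1 := by ring
        simp only [Nat.add_sub_cancel]
        omega
      omega
    · simp
  refine (degree_le_natDegree).trans_lt ?_
  have : (FF q n).natDegree < n := by omega
  exact_mod_cast this

lemma cc_le {v : Valuation K Γ} {q : K} {n : ℕ} (G : Good v q n) (h : 1 - q^n ≠ 0) (k : ℕ) :
    v (cc q n k) ≤ (v (1-q^n)^3)^((k + (n-1)/2) / n - k / n) := by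
  unfold cc
  have e1 : v (∏ i ∈ range k, hat q n (4*i+2) / hat q n (4*i+4)) = 1 := by
    apply vprod_eq
    intro i _
    rw [map_div₀, hat_val G h _ (by omega), hat_val G h _ (by omega), div_one]
  rw [map_mul, map_mul, map_mul, e1, mul_one, G.qpow, mul_one, map_pow, map_pow]
  exact (mul_le_mul' (G.le' _) le_rfl).trans (by simp)

lemma FF_close {v : Valuation K Γ} {q : K} {n : ℕ} (G : Good v q n) (hn : n % 2 = 1) (h : 1 - q^n ≠ 0) (w : K)
    (hv : v w ≤ 1) (hw : ∀ i, til q n (4*i+4) w ≠ 0) :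
    v ((∑ k ∈ range (n^2), (1 + q^(4*k+1)) * TT q ((1-q^n)^2*w) k) * (∏ i ∈ range (n^2-1), til q n (4*i+4) w) -
      (FF q n).eval w) ≤ v (1-q^n)^2 := by
  unfold FF
  rw [sum_mul, eval_finsetSum, ← sum_sub_distrib]
  refine Valuation.map_sum_le v ?_
  intro k hk
  rw [mem_range] at hk
  rw [TT_eq G hn h k (n^2-1) (by omega) w hw]
  have hc := cc_le G h k
  have t2 : ∀ s : Finset ℕ, v (∏ i ∈ s, til q n (4*i+2) w) ≤ 1 := fun s => vprod_le v _ _ (fun i _ => til_le G h _ (by omega) w hv)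
  have t4 : ∀ s : Finset ℕ, v (∏ i ∈ s, til q n (4*i+4) w) ≤ 1 := fun s => vprod_le v _ _ (fun i _ => til_le G h _ (by omega) w hv)
  split_ifs with hX
  · rw [hX, Nat.sub_self, pow_zero] at hc
    simp only [eval_mul, eval_C, eval_prod]
    rw [← mul_sub, map_mul]
    refine (mul_le_mul' hc (?_ : v _ ≤ v (1-q^n)^2)).trans (by simp)
    refine cong_mul v _ _ _ _ _ (t4 _) ?_ ?_ ?_
    · exact vprod_le v _ _ (fun i _ => bar_le G h _ (by omega) w hv)
    · exact cong_prod v _ _ _ _ (fun i _ => til_le G h _ (by omega) w hv) (fun i _ => bar_le G h _ (by omega) w hv)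
        (fun i _ => bar_close G _ w hv)
    · exact cong_prod v _ _ _ _ (fun i _ => til_le G h _ (by omega) w hv) (fun i _ => bar_le G h _ (by omega) w hv)
        (fun i _ => bar_close G _ w hv)
  · rw [eval_zero, sub_zero, map_mul, map_mul]
    refine (mul_le_mul' hc (mul_le_one' (t2 _) (t4 _))).trans ?_
    rw [mul_one, ← pow_mul]
    have := XY n k
    exact pow_le_pow_right_of_le_one' G.vpi.le (by omega)

/-- nodes -/
def node (q : K) (n j : ℕ) : K := ((1 - q^(n*(4*j+2)))/(1-q^n))^2 / q^(n*(4*j+2))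

lemma node_close {v : Valuation K Γ} {q : K} {n : ℕ} (G : Good v q n) (h : 1 - q^n ≠ 0) (j : ℕ) :
    v (node q n j - ((4*j+2)^2 : ℤ)) < 1 := by
  have g := geo_close G h (4*j+2)
  have gv : v ((1 - q^(n*(4*j+2)))/(1-q^n)) = 1 := by
    apply val_of_close _ _ g
    have := G.vint (4*j+2) (by omega)
    exact_mod_cast this
  have iv : v (((4*j+2 : ℕ) : K)) = 1 := by
    have := G.vint (4*j+2) (by omega)
    exact_mod_cast this
  have hq : v (1 - q^(n*(4*j+2))) < 1 := by
    rw [show 1 - q^(n*(4*j+2)) = (1-q^n) * ((1 - q^(n*(4*j+2)))/(1-q^n)) by field_simp, map_mul, gv, mul_one]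
    exact G.vpi
  have q0 := pow_ne_zero (n*(4*j+2)) G.q0
  unfold node
  have qp := G.qpow (n*(4*j+2))
  push_cast at g iv ⊢
  generalize q^(n*(4*j+2)) = b at *
  generalize (1 - b)/(1-q^n) = a at *
  generalize (4*(j:K)+2) = c at *
  rw [show a^2/b - c^2 = (a^2 * (1-b) + (a - c)*(a+c) * b)/b by field_simp; ring, map_div₀, qp, div_one]
  refine Valuation.map_add_lt v ?_ ?_
  · rw [map_mul, map_pow, gv, one_pow, one_mul]; exact hq
  · rw [map_mul, map_mul, qp, mul_one]
    exact (mul_le_mul' le_rfl (Valuation.map_add_le v gv.le iv.le)).trans_lt (by simpa using g)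

lemma sum_small {v : Valuation K Γ} {q : K} {n : ℕ} (G : Good v q n) (hn : n % 4 = 3) :
    v (∑ k ∈ range (n^2), (1 + q^(4*k+1)) * TT q 0 k) ≤ v (1 - q^n)^2 := by
  have hn2 : n % 2 = 1 := by omega
  have h : 1 - q^n ≠ 0 := by
    have := G.ne (n-1); rwa [show n - 1 + 1 = n by omega] at this
  have hne : ∀ x : K, v x = 1 → x ≠ 0 := by
    rintro x hx rfl; simp at hx
  have t0 : ∀ i, v (til q n (4*i+4) 0) = 1 := by
    intro i
    unfold til
    split_ifs with hd
    · rw [mul_zero, sub_zero, map_pow, hat_val G h _ (by omega), one_pow]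
    · rw [mul_zero, mul_zero, sub_zero, map_pow, G.vunit _ hd, one_pow]
  have c0 := FF_close G hn2 h 0 (by simp) (fun i => hne _ (t0 i))
  rw [mul_zero] at c0
  have D0 := vprod_eq v (range (n^2-1)) (fun i => til q n (4*i+4) 0) (fun i _ => t0 i)
  have nv : ∀ j, v (node q n j) = 1 := fun j =>
    val_of_close _ _ (node_close G h j) (G.vint _ (by positivity))
  have key : v ((FF q n).eval 0) ≤ v (1-q^n)^2 := by
    refine lagrange_val v _ n _ (FF_deg q n hn2) (node q n) (fun j _ => (nv j).le) ?_ ?_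
    · intro i _ j _ hij
      refine val_of_close _ ((((4*i+2)^2 : ℤ) - ((4*j+2)^2 : ℤ) : ℤ) : K) ?_ (G.vint _ ?_)
      · have a1 := node_close G h i
        have a2 := node_close G h j
        rw [Int.cast_sub, sub_sub_sub_comm]
        exact Valuation.map_sub_lt v a1 a2
      · intro he
        rw [sub_eq_zero] at he
        have := (pow_left_inj₀ (by positivity) (by positivity) (by norm_num)).1 he
        omega
    · intro j hj
      set M := n * j + (n-1)/2 with hM
      have eM : 4 * M + 2 = n * (4*j+2) := by
        have : 4 * M + 2 = 4 * (n*j) + 2 * n := by omega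
        rw [this]; ring
      have hML : M < n^2 := by
        have : n * j + n ≤ n * n := by
          have := Nat.mul_le_mul_left n (show j + 1 ≤ n by omega)
          rwa [mul_add, mul_one] at this
        rw [pow_two]; omega
      have S := UU_sum q G.q0 G.ne M (n^2) hML
      have b0 : q^(4*M+2) ≠ 0 := pow_ne_zero _ G.q0
      have ew : (q^(4*M+2) - 1)^2 / q^(4*M+2) = (1-q^n)^2 * node q n j := by
        unfold node
        rw [eM] at b0 ⊢
        field_simp; ring
      simp only [UU_eq_TT _ _ b0, ew] at S
      have tn : ∀ i, til q n (4*i+4) (node q n j) ≠ 0 := by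
        intro i h0
        have := til_mul q n (4*i+4) h (node q n j)
        rw [h0, mul_zero, ← ew, ← par_eq _ _ b0, ← pow_add] at this
        rcases mul_eq_zero.1 this with h1 | h1
        · exact G.ne (4*M+2+(4*i+4) - 1) h1
        · rw [sub_eq_zero, eq_comm, div_eq_one_iff_eq b0] at h1
          rcases lt_or_ge (4*i+4) (4*M+2) with h2 | h2
          · apply G.ne (4*M+2 - (4*i+4) - 1)
            have h3 : q^(4*M+2) = q^(4*i+4) * q^(4*M+2 - (4*i+4) - 1 + 1) := by
              rw [← pow_add]; congr 1; omega
            rw [h3] at h1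
            have h4 : q^(4*i+4) ≠ 0 := pow_ne_zero _ G.q0
            rw [eq_comm, mul_eq_left₀ h4] at h1
            rw [h1, sub_self]
          · apply G.ne (4*i+4 - (4*M+2) - 1)
            have h3 : q^(4*i+4) = q^(4*M+2) * q^(4*i+4 - (4*M+2) - 1 + 1) := by
              rw [← pow_add]; congr 1; omega
            rw [h3, mul_eq_left₀ b0] at h1
            rw [h1, sub_self]
      have c1 := FF_close G hn2 h (node q n j) (nv j).le tn
      rw [S] at c1
      have c2 := closed_small G hn j M hM
      have c3 := vprod_le v (range (n^2-1)) _ (fun i _ => til_le G h (4*i+4) (by omega) (node q n j) (nv j).le)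
      have g1 : v (1 + q) ≤ 1 := by simpa using G.le' 1
      have e : ∀ a b : K, b = a - (a - b) := by intros; ring
      rw [e _ (eval _ _)]
      refine Valuation.map_sub_le v ?_ c1
      rw [map_mul, map_mul]
      calc _ ≤ 1 * (v (1 - q^n)^2) * 1 := mul_le_mul' (mul_le_mul' g1 c2) c3
        _ = _ := by simp
  have e : ∀ a b : K, a = (a - b) + b := by intros; ring
  have fin : v ((∑ k ∈ range (n^2), (1 + q^(4*k+1)) * TT q 0 k) * (∏ i ∈ range (n^2-1), til q n (4*i+4) 0)) ≤ v (1-q^n)^2 := by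
    rw [e (_ * _)]
    exact Valuation.map_add_le v c0 key
  rwa [map_mul, D0, mul_one] at fin
end part4

section part5

lemma cyc_dvd (m : ℕ) (hm : 0 < m) (e : ℕ) (h : cyclotomic m ℚ ∣ 1 - X^e) : m ∣ e := by
  have hz := Complex.isPrimitiveRoot_exp m hm.ne'
  rw [← hz.pow_eq_one_iff_dvd]
  obtain ⟨c, hc⟩ := h
  have h2 := congrArg (aeval (Complex.exp (2 * Real.pi * Complex.I / m))) hc
  have h3 : aeval (Complex.exp (2 * Real.pi * Complex.I / m)) (cyclotomic m ℚ) = 0 := by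
    rw [aeval_def, ← eval_map, map_cyclotomic]
    exact hz.isRoot_cyclotomic hm
  rw [map_mul, h3, zero_mul] at h2
  simp only [map_sub, map_one, map_pow, aeval_X] at h2
  exact (sub_eq_zero.1 h2).symm

lemma getval (m : ℕ) (hm : 1 < m) : ∃ v : Valuation (RatFunc ℚ) (WithZero (Multiplicative ℤ)),
    Good v Q m ∧ ∀ x, v x ≤ v (1 - Q^m)^2 → cyclotomic m ℚ ^ 2 ∣ x.num := by
  have irr : Irreducible (cyclotomic m ℚ) := cyclotomic.irreducible_rat (by omega)
  have hp : Prime (cyclotomic m ℚ) := irr.prime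
  let P : IsDedekindDomain.HeightOneSpectrum ℚ[X] :=
    ⟨Ideal.span {cyclotomic m ℚ}, (Ideal.span_singleton_prime hp.ne_zero).2 hp, by
      simpa using hp.ne_zero⟩
  have alg : ∀ e : ℕ, (1 - Q^e : RatFunc ℚ) = algebraMap ℚ[X] (RatFunc ℚ) (1 - X^e) := by
    intro e; simp [Q]
  have lt1 : ∀ p : ℚ[X], P.valuation (RatFunc ℚ) (algebraMap ℚ[X] (RatFunc ℚ) p) < 1 ↔ cyclotomic m ℚ ∣ p := by
    intro p
    rw [IsDedekindDomain.HeightOneSpectrum.valuation_lt_one_iff_mem]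
    exact Ideal.mem_span_singleton
  have eq1 : ∀ p : ℚ[X], ¬ cyclotomic m ℚ ∣ p → P.valuation (RatFunc ℚ) (algebraMap ℚ[X] (RatFunc ℚ) p) = 1 := by
    intro p h
    refine le_antisymm (P.valuation_le_one p) ?_
    rw [← lt1] at h
    exact not_lt.1 h
  have dvdself : cyclotomic m ℚ ∣ 1 - X^m := by
    have := cyclotomic.dvd_X_pow_sub_one m ℚ
    rw [← dvd_neg]; simpa using this
  refine ⟨P.valuation (RatFunc ℚ), ⟨?_, ?_, ?_, ?_, ?_, ?_⟩, ?_⟩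
  · intro k hk
    have := eq1 (C (k:ℚ)) (by
      intro hd
      exact irr.not_isUnit (isUnit_of_dvd_unit hd (isUnit_C.2 (by simpa using hk))))
    simpa using this
  · rw [alg, lt1]; exact dvdself
  · intro e he
    rw [alg]; exact eq1 _ (fun hd => he (cyc_dvd m (by omega) e hd))
  · have := eq1 X (by
      intro hd
      have h2 : cyclotomic m ℚ ∣ 1 := by
        have : (1 : ℚ[X]) = (1 - X^m) + X^m := by ring
        rw [this]
        exact dvd_add dvdself (hd.trans (dvd_pow_self _ (by omega)))
      exact irr.not_isUnit (isUnit_of_dvd_one h2))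
    simpa [Q] using this
  · intro i h
    rw [alg, map_eq_zero_iff _ (IsFractionRing.injective ℚ[X] (RatFunc ℚ))] at h
    have := congrArg (eval 2) h
    simp at this
    have h2 : (1:ℚ) < 2^(i+1) := one_lt_pow₀ (by norm_num) (by omega)
    linarith
  · simp [Q, RatFunc.X_ne_zero]
  · intro x hx
    have hle : P.valuation (RatFunc ℚ) (algebraMap ℚ[X] (RatFunc ℚ) x.num) ≤ P.valuation (RatFunc ℚ) (algebraMap ℚ[X] (RatFunc ℚ) (cyclotomic m ℚ ^ 2)) := by
      have e : algebraMap ℚ[X] (RatFunc ℚ) x.num = x * algebraMap ℚ[X] (RatFunc ℚ) x.denom := by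
        have h1 := RatFunc.num_div_denom x
        have h0 : algebraMap ℚ[X] (RatFunc ℚ) x.denom ≠ 0 := RatFunc.algebraMap_ne_zero x.denom_ne_zero
        nth_rewrite 2 [← h1]
        field_simp
      rw [e, map_mul]
      refine (mul_le_mul' hx (P.valuation_le_one x.denom)).trans ?_
      rw [mul_one, map_pow, map_pow]
      obtain ⟨c, hc⟩ := dvdself
      rw [alg, hc, map_mul, map_mul]
      exact pow_le_pow_left' ((mul_le_mul' le_rfl (P.valuation_le_one c)).trans (by simp)) 2
    rw [IsDedekindDomain.HeightOneSpectrum.valuation_of_algebraMap, IsDedekindDomain.HeightOneSpectrum.valuation_of_algebraMap,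
      map_pow, P.intValuation_singleton hp.ne_zero rfl] at hle
    have e2 : (WithZero.exp (-1:ℤ))^2 = WithZero.exp (-((2:ℕ):ℤ)) := by
      rw [← WithZero.exp_nsmul]; norm_num
    rw [e2, P.intValuation_le_pow_iff_dvd] at hle
    rw [← Ideal.mem_span_singleton, ← Ideal.span_singleton_pow]
    exact Ideal.dvd_span_singleton.1 hle

lemma one_add_val {Γ : Type*} [LinearOrderedCommGroupWithZero Γ] {v : Valuation (RatFunc ℚ) Γ} {m : ℕ}
    (G : Good v Q m) (hm : 2 < m) : v (1 + Q) = 1 := by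
  have h1 := G.vunit 1 (fun h => by have := Nat.le_of_dvd (by norm_num) h; omega)
  have h2 := G.vunit 2 (fun h => by have := Nat.le_of_dvd (by norm_num) h; omega)
  rw [show 1 - Q^2 = (1 - Q^1) * (1 + Q) by ring, map_mul, h1, one_mul] at h2
  exact h2

/-- the closed form -/
noncomputable def CF (M : ℕ) : RatFunc ℚ := (1 - Q^(4*M+2)) / (1 - Q^2) *
       (∏ i ∈ range M, (1 - Q^(4*i+3)) / (1 - Q^(4*i+5))) / Q^M

lemma lhs_eq (k : ℕ) : (1 + Q ^ (4 * k + 1)) * qPoch (Q ^ 2) (Q ^ 4) k ^ 3 * Q ^ k /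
            ((1 + Q) * qPoch (Q ^ 4) (Q ^ 4) k ^ 3) = (1 + Q^(4*k+1)) * TT Q 0 k / (1 + Q) := by
  have e2 : ∀ i, (1 - Q^2 * (Q^4)^i) = 1 - Q^(4*i+2) := by intro i; ring
  have e4 : ∀ i, (1 - Q^4 * (Q^4)^i) = 1 - Q^(4*i+4) := by intro i; ring
  unfold qPoch TT
  simp only [e2, e4, mul_zero, sub_zero]
  simp only [← pow_succ', prod_div_distrib, prod_pow]
  rw [mul_comm (1 + Q) (_ ^ 3), ← div_div]
  congr 1
  ring

lemma rhs_eq (N : ℕ) (hN : N % 2 = 1) (h2 : 1 - Q^2 ≠ 0) : (∑ i ∈ Finset.range N, Q ^ (2 * i))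
            * qPoch (Q ^ 3) (Q ^ 4) ((N - 1) / 2)
            / qPoch (Q ^ 5) (Q ^ 4) ((N - 1) / 2)
            * (Q ^ ((N - 1) / 2))⁻¹ = CF ((N-1)/2) := by
  have e3 : ∀ i, (1 - Q^3 * (Q^4)^i) = 1 - Q^(4*i+3) := by intro i; ring
  have e5 : ∀ i, (1 - Q^5 * (Q^4)^i) = 1 - Q^(4*i+5) := by intro i; ring
  have es : ∑ i ∈ Finset.range N, Q ^ (2 * i) = (1 - Q^(4*((N-1)/2)+2)) / (1 - Q^2) := by
    rw [eq_div_iff h2, show 4*((N-1)/2)+2 = 2 * N by omega, pow_mul, ← geom_sum_mul_neg (Q^2) N]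
    simp only [pow_mul]
  unfold qPoch CF
  simp only [e3, e5, prod_div_distrib]
  rw [es, div_eq_mul_inv _ (Q^_)]
  ring
end part5

/-- For `n ≡ 3 (mod 4)` positive, modulo `Φ_n(q)^2 Φ_{n^2}(q)^2`:
`∑_{k=0}^{n^2-1} (1+q^{4k+1})(q^2;q^4)_k^3 q^k / ((1+q)(q^4;q^4)_k^3)
 ≡ [n^2]_{q^2} (q^3;q^4)_{(n^2-1)/2} / (q^5;q^4)_{(n^2-1)/2} · q^{(1-n^2)/2}`. -/
theorem stmt6 (n : ℕ) (hn : 0 < n) (h : n % 4 = 3) :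
    ∃ a b : Polynomial ℚ, ¬ (Polynomial.cyclotomic n ℚ ∣ b) ∧
      ¬ (Polynomial.cyclotomic (n ^ 2) ℚ ∣ b) ∧
      ((∑ k ∈ Finset.range (n ^ 2),
          (1 + Q ^ (4 * k + 1)) * qPoch (Q ^ 2) (Q ^ 4) k ^ 3 * Q ^ k /
            ((1 + Q) * qPoch (Q ^ 4) (Q ^ 4) k ^ 3))
        - (∑ i ∈ Finset.range (n ^ 2), Q ^ (2 * i))
            * qPoch (Q ^ 3) (Q ^ 4) ((n ^ 2 - 1) / 2)
            / qPoch (Q ^ 5) (Q ^ 4) ((n ^ 2 - 1) / 2)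
            * (Q ^ ((n ^ 2 - 1) / 2))⁻¹)
        * algebraMap (Polynomial ℚ) (RatFunc ℚ) b
      = algebraMap (Polynomial ℚ) (RatFunc ℚ)
          (Polynomial.cyclotomic n ℚ ^ 2 * Polynomial.cyclotomic (n ^ 2) ℚ ^ 2 * a) := by
  
  have hn3 : 3 ≤ n := by omega
  have hN9 : 9 ≤ n^2 := by nlinarith
  have hNodd : n^2 % 2 = 1 := by rw [pow_two, Nat.mul_mod, show n % 2 = 1 by omega]
  obtain ⟨v, G, hv⟩ := getval n (by omega)
  obtain ⟨v', G', hv'⟩ := getval (n^2) (by omega)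
  have h2 : (1:RatFunc ℚ) - Q^2 ≠ 0 := G.ne 1
  have h1 : v (1 + Q) = 1 := one_add_val G (by omega)
  have h1' : v' (1 + Q) = 1 := one_add_val G' (by omega)
  have hQ1 : (1:RatFunc ℚ) + Q ≠ 0 := by
    intro h0; rw [h0, map_zero] at h1; exact zero_ne_one h1
  rw [rhs_eq (n^2) hNodd h2]
  simp only [lhs_eq]
  rw [← sum_div]
  set S : RatFunc ℚ := ∑ k ∈ range (n^2), (1 + Q^(4*k+1)) * TT Q 0 k with hS
  set M := (n^2-1)/2 with hM
  set x : RatFunc ℚ := S / (1 + Q) - CF M with hx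
  have d1 : cyclotomic n ℚ ^ 2 ∣ x.num := by
    apply hv
    refine Valuation.map_sub_le v ?_ ?_
    · rw [map_div₀, h1, div_one]; exact sum_small G h
    · refine closed_small G h ((n-1)/2) M ?_
      have e : n^2 = n * (2 * ((n-1)/2)) + n := by
        rw [show 2 * ((n-1)/2) = n - 1 by omega, Nat.mul_sub, mul_one, pow_two, Nat.sub_add_cancel (Nat.le_mul_self n)]
      rw [show n * (2 * ((n-1)/2)) = 2 * (n * ((n-1)/2)) by ring] at e
      omega
  have d2 : cyclotomic (n^2) ℚ ^ 2 ∣ x.num := by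
    apply hv'
    have T := UU_sum Q G'.q0 G'.ne M (n^2) (by omega)
    have b0 : Q^(4*M+2) ≠ 0 := pow_ne_zero _ G'.q0
    simp only [UU_eq_TT _ _ b0] at T
    have vu : v' ((Q^(4*M+2) - 1)^2 / Q^(4*M+2)) ≤ v' (1 - Q^(n^2))^2 := by
      rw [map_div₀, G'.qpow, div_one, map_pow, Valuation.map_sub_swap,
        show 1 - Q^(4*M+2) = (1 - Q^(n^2)) * (1 + Q^(n^2)) by
          rw [show 4*M+2 = n^2 + n^2 by omega, pow_add]; ring, map_mul]
      exact pow_le_pow_left' ((mul_le_mul' le_rfl (G'.le' _)).trans (by simp)) 2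
    have vu1 : v' ((Q^(4*M+2) - 1)^2 / Q^(4*M+2)) < 1 :=
      vu.trans_lt (pow_lt_one₀ zero_le' G'.vpi (by norm_num))
    have c := sum_close G' hNodd _ vu1
    rw [T, ← hS] at c
    have ex : x = - (((1 + Q) * CF M - S) / (1 + Q)) := by
      rw [hx]; field_simp; ring
    rw [ex, Valuation.map_neg, map_div₀, h1', div_one]
    exact c.trans vu
  have irr1 : Irreducible (cyclotomic n ℚ) := cyclotomic.irreducible_rat (by omega)
  have irr2 : Irreducible (cyclotomic (n^2) ℚ) := cyclotomic.irreducible_rat (by omega)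
  have cop : IsCoprime (cyclotomic n ℚ ^ 2) (cyclotomic (n^2) ℚ ^ 2) :=
    (cyclotomic.isCoprime_rat (by nlinarith : n ≠ n^2)).pow
  obtain ⟨a, ha⟩ := cop.mul_dvd d1 d2
  have cnd := RatFunc.isCoprime_num_denom x
  refine ⟨a, x.denom, ?_, ?_, ?_⟩
  · intro hd
    exact irr1.not_isUnit (cnd.isUnit_of_dvd' ((dvd_pow_self _ (by norm_num)).trans d1) hd)
  · intro hd
    exact irr2.not_isUnit (cnd.isUnit_of_dvd' ((dvd_pow_self _ (by norm_num)).trans d2) hd)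
  · rw [← ha]
    have h0 : algebraMap ℚ[X] (RatFunc ℚ) x.denom ≠ 0 := RatFunc.algebraMap_ne_zero x.denom_ne_zero
    nth_rewrite 1 [← RatFunc.num_div_denom x]
    field_simp
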